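/- Let n ≥ 1 and d ≥ 1, and let X = (S^d)^{×n} be the product of n copies of the sphere S^d with the product topology. Then TC(X) = n if d is odd, and TC(X) = 2n if d is even. -/

import Mathlib

open scoped ENNReal

/-- The (reduced) topological complexity of a space `X`: the least `n` (or `∞`) such that
`X × X` admits a cover by `n + 1` open sets, each carrying a continuous motion planner,
i.e. a continuous map `s : Uᵢ → P(X)` with `(s z) 0 = z.1` and `(s z) 1 = z.2`. -/
noncomputable def topComplexity (X : Type*) [TopologicalSpace X] : ℕ∞ :=
  sInf {n : ℕ∞ | ∃ m : ℕ, n = (m : ℕ∞) ∧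
    ∃ U : Fin (m + 1) → Set (X × X), (∀ i, IsOpen (U i)) ∧ (⋃ i, U i) = Set.univ ∧
      ∀ i, ∃ s : C(U i, C(unitInterval, X)),
        ∀ z : U i, (s z) 0 = (z : X × X).1 ∧ (s z) 1 = (z : X × X).2}

/-- The unit sphere `S^d ⊆ ℝ^{d+1}` with its subspace topology. -/
noncomputable def unitSphere (d : ℕ) : Type :=
  Metric.sphere (0 : EuclideanSpace ℝ (Fin (d + 1))) 1

noncomputable instance (d : ℕ) : TopologicalSpace (unitSphere d) :=
  instTopologicalSpaceSubtype

open scoped ContDiff InnerProductSpace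

/-!
For the lower bound, let `Z` be a power of the sphere with `N` factors and `f : Z → X × X` a map
along which motion planners make given maps `a j : Z → S^d` homotopic to `z ↦ -z j` for all `j < N`.
If `N` open sets with motion planners covered `X × X`, then deforming `a j` over the `j`-th set only
would yield a self-map `G` of `Z`, homotopic to `(a j)_j`, such that for each `z` some coordinate of
`G z` is `-z j`; so `G` has no fixed point. With `N = n` this applies to constant maps `a j`; for
`d` even, with `N = 2n` and `X × X = Z`, it applies to the swap `(x, y) ↦ (-y, -x)`. That such maps
keep a fixed point under homotopy is a degree argument: a displacement whose zeros all have positive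
Jacobian cannot be deformed to one without zeros, because the Jacobian determinant is a null
Lagrangian. For the swap one first deforms it to `(x, y) ↦ (-y, -ρ x)` with `ρ` the reflection in a
line, which is homotopic to the identity as its `-1`-eigenspace has even dimension `d`.

For the upper bound, motion planners on the sphere are built from the linear vector fields
`x ↦ J x` with `J` skew: the motion from `x` to `y` follows the shortest arc if `y ≠ -x`, and passes
through `-x` in the direction of `J x` if `J x ≠ 0` and `y ≠ x`. One field without zeros exists if
`d` is odd, and two fields without common zeros if `d` is even; the product inequality for `TC` then
gives the bound for `X`.
-/

section NullLagrangian

open MeasureTheory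

theorem sum_sum_eq_zero_of_antisymm {κ M : Type*} [Fintype κ] [AddCommGroup M]
    [IsAddTorsionFree M] {T : κ → κ → M} (hT : ∀ j l, T j l = -T l j) :
    ∑ j, ∑ l, T j l = 0 := by
  refine self_eq_neg.1 (Finset.sum_comm.trans ?_)
  simp only [← Finset.sum_neg_distrib, ← hT]

section IntegrationByParts

variable {E : Type*} [NormedAddCommGroup E]

theorem integrable_mul_of_hasCompactSupport [MeasurableSpace E] [BorelSpace E] {μ : Measure E}
    [IsFiniteMeasureOnCompacts μ] {a c : E → ℝ} (ha : Continuous a) (hc : Continuous c)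
    (hcs : HasCompactSupport c) : Integrable (fun x => a x * c x) μ :=
  (ha.mul hc).integrable_of_hasCompactSupport hcs.mul_left

variable [NormedSpace ℝ E]

theorem hasCompactSupport_fderiv_apply {c : E → ℝ} (hcs : HasCompactSupport c) (v : E) :
    HasCompactSupport fun x => fderiv ℝ c x v :=
  (hcs.fderiv (𝕜 := ℝ)).comp_left (g := fun L : E →L[ℝ] ℝ => L v) rfl

theorem continuous_fderiv_apply {c : E → ℝ} (hc : ContDiff ℝ 1 c) (v : E) :
    Continuous fun x => fderiv ℝ c x v :=
  (hc.continuous_fderiv one_ne_zero).clm_apply continuous_const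

theorem integral_mul_fderiv_apply_eq_neg [FiniteDimensional ℝ E] [MeasurableSpace E]
    [BorelSpace E] {μ : Measure E} [μ.IsAddHaarMeasure] {a c : E → ℝ} (ha : ContDiff ℝ 1 a)
    (hc : ContDiff ℝ 1 c) (hcs : HasCompactSupport c) (v : E) :
    ∫ x, a x * fderiv ℝ c x v ∂μ = -∫ x, fderiv ℝ a x v * c x ∂μ :=
  integral_mul_fderiv_eq_neg_fderiv_mul_of_integrable
    (integrable_mul_of_hasCompactSupport (continuous_fderiv_apply ha v) hc.continuous hcs)
    (integrable_mul_of_hasCompactSupport ha.continuous (continuous_fderiv_apply hc v)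
      (hasCompactSupport_fderiv_apply hcs v))
    (integrable_mul_of_hasCompactSupport ha.continuous hc.continuous hcs)
    (fun x _ => ha.differentiable one_ne_zero x) (fun x _ => hc.differentiable one_ne_zero x)

end IntegrationByParts

variable {κ : Type*} [Fintype κ] [DecidableEq κ]

/-- The determinant as a continuous multilinear function of the rows. -/
noncomputable def detRowContinuousMultilinear (R κ : Type*) [Fintype κ] [DecidableEq κ]
    [CommRing R] [TopologicalSpace R] [IsTopologicalRing R] :
    ContinuousMultilinearMap R (fun _ : κ => κ → R) R where
  toMultilinearMap := Matrix.detRowAlternating.toMultilinearMap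
  cont := continuous_id.matrix_det

theorem fderiv_det {𝕜 E : Type*} [NontriviallyNormedField 𝕜] [NormedAddCommGroup E]
    [NormedSpace 𝕜 E] {A : E → Matrix κ κ 𝕜} {x : E}
    (hA : ∀ l, DifferentiableAt 𝕜 (fun y => A y l) x) (v : E) :
    fderiv 𝕜 (fun y => (A y).det) x v
      = ∑ l, ((A x).updateRow l (fderiv 𝕜 (fun y => A y l) x v)).det := by
  have hdet : HasFDerivAt (fun y => (A y).det) _ x :=
    HasFDerivAt.multilinear_comp (f := detRowContinuousMultilinear 𝕜 κ)
      fun l => (hA l).hasFDerivAt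
  rw [hdet.fderiv, sum_apply]
  rfl

theorem det_updateRow_updateRow_comm {R : Type*} [CommRing R] (M : Matrix κ κ R) {j l : κ}
    (hjl : j ≠ l) (u w : κ → R) :
    ((M.updateRow j w).updateRow l u).det = -((M.updateRow l w).updateRow j u).det := by
  have hswap : (M.updateRow j w).updateRow l u
      = ((M.updateRow l w).updateRow j u).submatrix (Equiv.swap j l) id := by
    ext a b
    obtain rfl | haj := eq_or_ne a j
    · simp [hjl, hjl.symm, Matrix.updateRow_apply]
    obtain rfl | hal := eq_or_ne a l
    · simp [Matrix.updateRow_apply]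
    · simp [haj, hal, Matrix.updateRow_apply, Equiv.swap_apply_of_ne_of_ne]
  rw [hswap, Matrix.det_permute, Equiv.Perm.sign_swap hjl]
  simp

/-- The transposed Jacobian matrix of a self-map of `ℝ^κ`: row `j` is the `j`-th partial
derivative. -/
noncomputable def jacobianT (F : (κ → ℝ) → κ → ℝ) (x : κ → ℝ) : Matrix κ κ ℝ :=
  Matrix.of fun j => fderiv ℝ F x (Pi.single j 1)

variable {F G : (κ → ℝ) → κ → ℝ}

theorem det_jacobianT (x : κ → ℝ) : (jacobianT F x).det = (fderiv ℝ F x).det := by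
  rw [ContinuousLinearMap.det, ← LinearMap.det_toMatrix', ← Matrix.det_transpose]
  rfl

omit [Fintype κ] in
theorem jacobianT_apply [Finite κ] {x : κ → ℝ} (hF : DifferentiableAt ℝ F x) (j k : κ) :
    jacobianT F x j k = fderiv ℝ (fun y => F y k) x (Pi.single j 1) := by
  have := Fintype.ofFinite κ
  rw [fderiv_apply hF]
  rfl

theorem contDiff_jacobianT (hF : ContDiff ℝ 2 F) (j : κ) :
    ContDiff ℝ 1 fun x => jacobianT F x j :=
  (hF.fderiv_right le_rfl).clm_apply contDiff_const

theorem contDiff_updateRow_jacobianT (hF : ContDiff ℝ 2 F) (j : κ) (w : κ → ℝ) (l : κ) :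
    ContDiff ℝ 1 fun x => (jacobianT F x).updateRow j w l := by
  obtain rfl | h := eq_or_ne l j
  · simpa only [Matrix.updateRow_self] using contDiff_const
  · simpa only [Matrix.updateRow_ne h] using contDiff_jacobianT hF l

theorem contDiff_det_updateRow_jacobianT (hF : ContDiff ℝ 2 F) (j : κ) (w : κ → ℝ) :
    ContDiff ℝ 1 fun x => ((jacobianT F x).updateRow j w).det :=
  (detRowContinuousMultilinear ℝ κ).contDiff.comp
    (contDiff_pi.2 (contDiff_updateRow_jacobianT hF j w))

theorem fderiv_det_updateRow_jacobianT (hF : ContDiff ℝ 2 F) (j : κ) (w x v : κ → ℝ) :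
    fderiv ℝ (fun y => ((jacobianT F y).updateRow j w).det) x v =
      ∑ l, if l = j then 0 else (((jacobianT F x).updateRow j w).updateRow l
        (fderiv ℝ (fderiv ℝ F) x v (Pi.single l 1))).det := by
  rw [fderiv_det fun l =>
    (contDiff_updateRow_jacobianT hF j w l).differentiable one_ne_zero x]
  refine Finset.sum_congr rfl fun l _ => ?_
  split_ifs with h
  · subst h
    simp only [Matrix.updateRow_self, fderiv_fun_const, Pi.zero_apply, zero_apply]
    exact Matrix.det_eq_zero_of_row_eq_zero l (congrFun Matrix.updateRow_self)
  · have hF' : DifferentiableAt ℝ (fderiv ℝ F) x :=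
      (hF.fderiv_right (m := 1) le_rfl).differentiable one_ne_zero x
    have hrow : (fun y => (jacobianT F y).updateRow j w l)
        = fun y => fderiv ℝ F y (Pi.single l 1) :=
      funext fun y => Matrix.updateRow_ne h
    rw [hrow, fderiv_clm_apply hF' (differentiableAt_const _)]
    simp

-- Piola's identity.
theorem sum_fderiv_det_updateRow_jacobianT_eq_zero (hF : ContDiff ℝ 2 F) (w x : κ → ℝ) :
    ∑ j, fderiv ℝ (fun y => ((jacobianT F y).updateRow j w).det) x (Pi.single j 1) = 0 := by
  simp only [fderiv_det_updateRow_jacobianT hF]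
  refine sum_sum_eq_zero_of_antisymm fun j l => ?_
  obtain rfl | hjl := eq_or_ne j l
  · simp
  have hsymm : fderiv ℝ (fderiv ℝ F) x (Pi.single j 1) (Pi.single l 1)
      = fderiv ℝ (fderiv ℝ F) x (Pi.single l 1) (Pi.single j 1) :=
    hF.contDiffAt.isSymmSndFDerivAt (by simp) _ _
  rw [if_neg hjl.symm, if_neg hjl, hsymm, det_updateRow_updateRow_comm _ hjl]

theorem det_updateCol_eq_sum {R : Type*} [CommRing R] (M : Matrix κ κ R) (i : κ) (c : κ → R) :
    (M.updateCol i c).det = ∑ j, (M.updateRow j (Pi.single i 1)).det * c j := by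
  rw [← Matrix.cramer_apply, Matrix.cramer_eq_adjugate_mulVec]
  simp only [Matrix.mulVec, dotProduct, Matrix.adjugate_apply]

theorem integrable_det_updateCol_jacobianT (hF : ContDiff ℝ 2 F)
    {c : (κ → ℝ) → ℝ} (hc : ContDiff ℝ 1 c) (hcs : HasCompactSupport c) (i : κ) :
    Integrable fun x =>
      ((jacobianT F x).updateCol i fun j => fderiv ℝ c x (Pi.single j 1)).det := by
  simp only [det_updateCol_eq_sum]
  exact integrable_finsetSum _ fun j _ => integrable_mul_of_hasCompactSupport
    (contDiff_det_updateRow_jacobianT hF j _).continuous (continuous_fderiv_apply hc _)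
    (hasCompactSupport_fderiv_apply hcs _)

theorem integral_det_updateCol_jacobianT_eq_zero (hF : ContDiff ℝ 2 F)
    {c : (κ → ℝ) → ℝ} (hc : ContDiff ℝ 1 c) (hcs : HasCompactSupport c) (i : κ) :
    ∫ x, ((jacobianT F x).updateCol i fun j => fderiv ℝ c x (Pi.single j 1)).det = 0 := by
  have ha (j) := contDiff_det_updateRow_jacobianT hF j (Pi.single i 1)
  have hint (j) := integrable_mul_of_hasCompactSupport (μ := volume) (ha j).continuous
    (continuous_fderiv_apply hc (Pi.single j 1)) (hasCompactSupport_fderiv_apply hcs _)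
  have hint' (j) := integrable_mul_of_hasCompactSupport (μ := volume)
    (continuous_fderiv_apply (ha j) (Pi.single j 1)) hc.continuous hcs
  simp only [det_updateCol_eq_sum]
  rw [integral_finsetSum _ fun j _ => hint j]
  simp only [integral_mul_fderiv_apply_eq_neg (ha _) hc hcs]
  rw [Finset.sum_neg_distrib, ← integral_finsetSum _ fun j _ => hint' j]
  simp only [← Finset.sum_mul, sum_fderiv_det_updateRow_jacobianT_eq_zero hF, zero_mul,
    integral_zero, neg_zero]

theorem contDiff_piecewise {n : ℕ∞ω} (hF : ContDiff ℝ n F) (hG : ContDiff ℝ n G) (s : Finset κ) :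
    ContDiff ℝ n fun x => s.piecewise (G x) (F x) := by
  refine contDiff_pi.2 fun k => ?_
  by_cases h : k ∈ s
  · simpa only [Finset.piecewise_eq_of_mem _ _ _ h] using contDiff_pi.1 hG k
  · simpa only [Finset.piecewise_eq_of_notMem _ _ _ h] using contDiff_pi.1 hF k

theorem jacobianT_piecewise_insert (hF : ContDiff ℝ 2 F) (hG : ContDiff ℝ 2 G)
    {i : κ} {s : Finset κ} (hi : i ∉ s) (x : κ → ℝ) :
    jacobianT (fun y => (insert i s).piecewise (G y) (F y)) x =
      (jacobianT (fun y => s.piecewise (G y) (F y)) x).updateCol i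
        ((fun j => fderiv ℝ (fun y => G y i - F y i) x (Pi.single j 1)) +
          fun j => jacobianT (fun y => s.piecewise (G y) (F y)) x j i) := by
  have hdiff (t : Finset κ) : DifferentiableAt ℝ (fun y => t.piecewise (G y) (F y)) x :=
    (contDiff_piecewise hF hG t).differentiable two_ne_zero x
  ext j k
  obtain rfl | hk := eq_or_ne k i
  · simp only [Matrix.updateCol_self, Pi.add_apply, jacobianT_apply (hdiff _),
      Finset.piecewise_insert_self, Finset.piecewise_eq_of_notMem _ _ _ hi]
    rw [fderiv_fun_sub ((contDiff_pi.1 hG k).differentiable two_ne_zero x)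
      ((contDiff_pi.1 hF k).differentiable two_ne_zero x)]
    simp
  · simp only [Matrix.updateCol_ne hk, jacobianT_apply (hdiff _),
      Finset.piecewise_insert_of_ne _ _ _ hk]

theorem det_jacobianT_piecewise_insert (hF : ContDiff ℝ 2 F) (hG : ContDiff ℝ 2 G)
    {i : κ} {s : Finset κ} (hi : i ∉ s) (x : κ → ℝ) :
    (jacobianT (fun y => (insert i s).piecewise (G y) (F y)) x).det =
      ((jacobianT (fun y => s.piecewise (G y) (F y)) x).updateCol i fun j =>
        fderiv ℝ (fun y => G y i - F y i) x (Pi.single j 1)).det +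
      (jacobianT (fun y => s.piecewise (G y) (F y)) x).det := by
  rw [jacobianT_piecewise_insert hF hG hi, Matrix.det_updateCol_add, Matrix.updateCol_eq_self]

theorem integral_det_jacobianT_sub_eq_zero (hF : ContDiff ℝ 2 F) (hG : ContDiff ℝ 2 G)
    (hcs : HasCompactSupport (G - F)) :
    ∫ x, ((jacobianT G x).det - (jacobianT F x).det) = 0 := by
  suffices key : ∀ s : Finset κ,
      Integrable (fun x => (jacobianT (fun y => s.piecewise (G y) (F y)) x).det
        - (jacobianT F x).det) ∧
      ∫ x, ((jacobianT (fun y => s.piecewise (G y) (F y)) x).det - (jacobianT F x).det) = 0 by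
    simpa only [Finset.piecewise_univ] using (key Finset.univ).2
  intro s
  induction s using Finset.induction_on with
  | empty => simp
  | insert i s hi ih =>
    have hP := contDiff_piecewise hF hG s
    have hc : ContDiff ℝ 1 fun x => G x i - F x i :=
      ((contDiff_pi.1 hG i).sub (contDiff_pi.1 hF i)).of_le one_le_two
    have hcs' : HasCompactSupport fun x => G x i - F x i :=
      hcs.comp_left (g := fun v : κ → ℝ => v i) rfl
    simp only [det_jacobianT_piecewise_insert hF hG hi, add_sub_assoc]
    have hint := integrable_det_updateCol_jacobianT hP hc hcs' i
    refine ⟨hint.add ih.1, ?_⟩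
    rw [integral_add hint ih.1, integral_det_updateCol_jacobianT_eq_zero hP hc hcs', ih.2,
      add_zero]

theorem det_fderiv_conj {V W : Type*} [NormedAddCommGroup V] [NormedSpace ℝ V]
    [NormedAddCommGroup W] [NormedSpace ℝ W] (e : V ≃L[ℝ] W) (f : V → V) (y : W) :
    (fderiv ℝ (e ∘ f ∘ e.symm) y).det = (fderiv ℝ f (e.symm y)).det := by
  rw [e.comp_fderiv, e.symm.comp_right_fderiv]
  exact LinearMap.det_conj (fderiv ℝ f (e.symm y) : V →ₗ[ℝ] V) e.toLinearEquiv

-- The Jacobian determinant is a null Lagrangian.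
theorem integral_det_fderiv_sub_eq_zero {V : Type*} [NormedAddCommGroup V] [NormedSpace ℝ V]
    [FiniteDimensional ℝ V] [MeasurableSpace V] [BorelSpace V] (μ : Measure V)
    [μ.IsAddHaarMeasure] {F G : V → V} (hF : ContDiff ℝ 2 F) (hG : ContDiff ℝ 2 G)
    (hcs : HasCompactSupport (G - F)) :
    ∫ x, ((fderiv ℝ G x).det - (fderiv ℝ F x).det) ∂μ = 0 := by
  let e : V ≃L[ℝ] (Fin (Module.finrank ℝ V) → ℝ) :=
    ContinuousLinearEquiv.ofFinrankEq (by simp)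
  have hconj {f : V → V} (hf : ContDiff ℝ 2 f) : ContDiff ℝ 2 (e ∘ f ∘ e.symm) :=
    e.contDiff.comp (hf.comp e.symm.contDiff)
  have hcs' : HasCompactSupport (e ∘ G ∘ e.symm - e ∘ F ∘ e.symm) := by
    have hsub : e ∘ G ∘ e.symm - e ∘ F ∘ e.symm = e ∘ (G - F) ∘ e.symm :=
      funext fun y => (map_sub e _ _).symm
    rw [hsub]
    exact (hcs.comp_homeomorph e.symm.toHomeomorph).comp_left (map_zero e)
  have hμ : μ = _ • (volume.map e.symm) := Measure.isAddLeftInvariant_eq_smul _ _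
  rw [hμ, integral_smul_nnreal_measure,
    MeasurableEmbedding.integral_map (f := e.symm) e.symm.toHomeomorph.measurableEmbedding]
  have hzero := integral_det_jacobianT_sub_eq_zero (hconj hF) (hconj hG) hcs'
  simp only [det_jacobianT, det_fderiv_conj] at hzero
  rw [hzero, smul_zero]

end NullLagrangian

section Degree

open MeasureTheory Set Topology

theorem exists_contDiff_deriv_eq {n : ℕ} {b : ℝ → ℝ} (hb : ContDiff ℝ n b) :
    ∃ B : ℝ → ℝ, ContDiff ℝ (n + 1) B ∧ deriv B = b := by
  have hderiv (s : ℝ) : HasDerivAt (fun s => ∫ t in (0 : ℝ)..s, b t) (b s) s :=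
    (hb.continuous.integral_hasStrictDerivAt 0 s).hasDerivAt
  have hB : deriv (fun s => ∫ t in (0 : ℝ)..s, b t) = b := funext fun s => (hderiv s).deriv
  refine ⟨fun s => ∫ t in (0 : ℝ)..s, b t, ?_, hB⟩
  rw [contDiff_succ_iff_deriv, hB]
  exact ⟨fun s => (hderiv s).differentiableAt, by simp, hb⟩

theorem exists_contDiff_deriv_eq_bump {δ : ℝ} (hδ : 0 < δ) : ∃ B : ℝ → ℝ, ContDiff ℝ 2 B ∧
    (∀ s, 0 ≤ deriv B s) ∧ 0 < deriv B 0 ∧ ∀ s, δ ≤ |s| → deriv B s = 0 := by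
  let b : ContDiffBump (0 : ℝ) := ⟨δ / 2, δ, half_pos hδ, half_lt_self hδ⟩
  obtain ⟨B, hB, hderiv⟩ := exists_contDiff_deriv_eq (n := 1) b.contDiff
  refine ⟨B, hB, ?_⟩
  rw [hderiv]
  exact ⟨fun s => b.nonneg, b.pos_of_mem_ball (Metric.mem_ball_self hδ),
    fun s hs => b.zero_of_le_dist (by rwa [Real.dist_eq, sub_zero])⟩

theorem det_fderiv_pi_diagonal {κ : Type*} [Fintype κ] {B : ℝ → ℝ} (hB : Differentiable ℝ B)
    (x : κ → ℝ) : (fderiv ℝ (fun (y : κ → ℝ) k => B (y k)) x).det = ∏ k, deriv B (x k) := by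
  classical
  have hderiv : HasFDerivAt (fun (y : κ → ℝ) k => B (y k)) (ContinuousLinearMap.pi fun k =>
      deriv B (x k) • (ContinuousLinearMap.proj k : (κ → ℝ) →L[ℝ] ℝ)) x :=
    hasFDerivAt_pi.2 fun k => (hB (x k)).hasDerivAt.comp_hasFDerivAt x (hasFDerivAt_apply k x)
  have hdiag : jacobianT (fun (y : κ → ℝ) k => B (y k)) x
      = Matrix.diagonal fun k => deriv B (x k) := by
    ext j k
    simp only [jacobianT, hderiv.fderiv, Matrix.of_apply, ContinuousLinearMap.coe_pi',
      smul_apply, ContinuousLinearMap.proj_apply, Pi.single_apply,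
      Matrix.diagonal_apply, smul_eq_mul, mul_ite, mul_one, mul_zero, eq_comm (a := j)]
    split_ifs with h
    · rw [h]
    · rfl
  rw [← det_jacobianT, hdiag, Matrix.det_diagonal]

theorem exists_contDiff_det_fderiv_eq_bump (V : Type*) [NormedAddCommGroup V] [NormedSpace ℝ V]
    [FiniteDimensional ℝ V] {δ : ℝ} (hδ : 0 < δ) :
    ∃ β : V → V, ContDiff ℝ 2 β ∧ (∀ v, 0 ≤ (fderiv ℝ β v).det) ∧ 0 < (fderiv ℝ β 0).det ∧
      ∀ v, δ ≤ ‖v‖ → (fderiv ℝ β v).det = 0 := by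
  let e : V ≃L[ℝ] (Fin (Module.finrank ℝ V) → ℝ) :=
    ContinuousLinearEquiv.ofFinrankEq (by simp)
  obtain ⟨C, hC, hbound⟩ : ∃ C > 0, ∀ v, ‖v‖ ≤ C * ‖e v‖ := by
    obtain ⟨C, hC, hbound⟩ := e.symm.toContinuousLinearMap.bound
    exact ⟨C, hC, fun v => by simpa using hbound (e v)⟩
  obtain ⟨B, hB, hnonneg, hpos, hzero⟩ := exists_contDiff_deriv_eq_bump (div_pos hδ hC)
  have hdet (v : V) : (fderiv ℝ (e.symm ∘ (fun y k => B (y k)) ∘ e) v).det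
      = ∏ k, deriv B (e v k) := by
    rw [← det_fderiv_pi_diagonal (hB.differentiable two_ne_zero)]
    exact det_fderiv_conj e.symm _ v
  have hB' : ContDiff ℝ 2 fun (y : Fin (Module.finrank ℝ V) → ℝ) k => B (y k) :=
    contDiff_pi.2 fun k => hB.comp (contDiff_apply ℝ ℝ k)
  refine ⟨e.symm ∘ (fun y k => B (y k)) ∘ e, e.symm.contDiff.comp (hB'.comp (f := e) e.contDiff),
    fun v => ?_, ?_, fun v hv => ?_⟩
  · exact hdet v ▸ Finset.prod_nonneg fun k _ => hnonneg _
  · rw [hdet, map_zero]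
    exact Finset.prod_pos fun k _ => hpos
  · obtain ⟨k, hk⟩ : ∃ k, δ / C ≤ |e v k| := by
      by_contra! hlt
      have : ‖e v‖ < δ / C := (pi_norm_lt_iff (div_pos hδ hC)).2 hlt
      rw [lt_div_iff₀' hC] at this
      exact (hv.trans (hbound v)).not_gt this
    exact hdet v ▸ Finset.prod_eq_zero (Finset.mem_univ k) (hzero _ hk)

theorem exists_pos_forall_le_norm {X V : Type*} [TopologicalSpace X] [NormedAddCommGroup V]
    {K : Set X} (hK : IsCompact K) {u : X → V} (hu : Continuous u) (h0 : ∀ x ∈ K, u x ≠ 0) :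
    ∃ δ > 0, ∀ x ∈ K, δ ≤ ‖u x‖ :=
  hK.exists_forall_le' hu.norm.continuousOn fun x hx => norm_pos_iff.2 (h0 x hx)

variable {V : Type*} [NormedAddCommGroup V] [NormedSpace ℝ V]

theorem det_fderiv_comp {f g : V → V} (hg : Differentiable ℝ g) (hf : Differentiable ℝ f) (x : V) :
    (fderiv ℝ (g ∘ f) x).det = (fderiv ℝ g (f x)).det * (fderiv ℝ f x).det := by
  rw [fderiv_comp x (hg (f x)) (hf x)]
  exact LinearMap.det_comp _ _

theorem continuous_det_fderiv {F : V → V} (hF : ContDiff ℝ 1 F) :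
    Continuous fun x => (fderiv ℝ F x).det :=
  ContinuousLinearMap.continuous_det.comp (hF.continuous_fderiv one_ne_zero)

variable [FiniteDimensional ℝ V] {K : Set V} {f : V → V} {x₀ : V}

theorem det_fderiv_eq_of_le_of_eqOn_compl (hK : IsCompact K) {g : V → V} (hf : ContDiff ℝ 2 f)
    (hg : ContDiff ℝ 2 g) (hfg : EqOn f g Kᶜ)
    (hle : ∀ x ∈ K, (fderiv ℝ g x).det ≤ (fderiv ℝ f x).det) (x : V) :
    (fderiv ℝ g x).det = (fderiv ℝ f x).det := by
  have hoff : ∀ y ∉ K, (fderiv ℝ f y).det - (fderiv ℝ g y).det = 0 := fun y hy => by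
    have heq : f =ᶠ[𝓝 y] g := hfg.eventuallyEq_of_mem (hK.isClosed.isOpen_compl.mem_nhds hy)
    rw [heq.fderiv_eq, sub_self]
  have hnonneg (y : V) : 0 ≤ (fderiv ℝ f y).det - (fderiv ℝ g y).det := by
    by_cases hy : y ∈ K
    · exact sub_nonneg.2 (hle y hy)
    · exact (hoff y hy).ge
  by_contra hne
  borelize V
  exact (integral_det_fderiv_sub_eq_zero Measure.addHaar hg hf
    (HasCompactSupport.intro hK fun y hy => sub_eq_zero.2 (hfg hy))).not_gt
    (Continuous.integral_pos_of_hasCompactSupport_nonneg_nonzero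
      ((continuous_det_fderiv (hf.of_le one_le_two)).sub
        (continuous_det_fderiv (hg.of_le one_le_two)))
      (HasCompactSupport.intro hK hoff) hnonneg (sub_ne_zero.2 (Ne.symm hne)))

/- If `g` had no zero, then composing `f` and `g` with a map `β` whose Jacobian is a bump at `0`
would give maps with `det D(β ∘ g) = 0 ≤ det D(β ∘ f)` on `K` and a strict inequality at `x₀`. -/
theorem exists_eq_zero_of_contDiff_of_eqOn_compl (hK : IsCompact K) {g : V → V}
    (hf : ContDiff ℝ 2 f) (hg : ContDiff ℝ 2 g) (hfg : EqOn f g Kᶜ)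
    (hpos : ∀ x ∈ K, f x = 0 → 0 < (fderiv ℝ f x).det) (hx₀ : x₀ ∈ K) (hfx₀ : f x₀ = 0) :
    ∃ x ∈ K, g x = 0 := by
  by_contra! hne
  obtain ⟨δ₁, hδ₁, hδg⟩ := exists_pos_forall_le_norm hK hg.continuous hne
  obtain ⟨δ₂, hδ₂, hδf⟩ : ∃ δ > 0, ∀ x ∈ K ∩ {x | (fderiv ℝ f x).det ≤ 0}, δ ≤ ‖f x‖ :=
    exists_pos_forall_le_norm (hK.inter_right (isClosed_le
      (continuous_det_fderiv (hf.of_le one_le_two)) continuous_const)) hf.continuous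
      fun x hx h0 => (hpos x hx.1 h0).not_ge hx.2
  obtain ⟨β, hβ, hβnonneg, hβpos, hβzero⟩ :=
    exists_contDiff_det_fderiv_eq_bump V (lt_min hδ₁ hδ₂)
  have hcomp {u : V → V} (hu : ContDiff ℝ 2 u) (x : V) :=
    det_fderiv_comp (hβ.differentiable two_ne_zero) (hu.differentiable two_ne_zero) x
  have hg_zero : ∀ x ∈ K, (fderiv ℝ (β ∘ g) x).det = 0 := fun x hx => by
    rw [hcomp hg, hβzero _ ((min_le_left _ _).trans (hδg x hx)), zero_mul]
  have hf_nonneg : ∀ x ∈ K, 0 ≤ (fderiv ℝ (β ∘ f) x).det := fun x hx => by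
    rw [hcomp hf]
    obtain hle | hlt := le_or_gt (fderiv ℝ f x).det 0
    · rw [hβzero _ ((min_le_right _ _).trans (hδf x ⟨hx, hle⟩)), zero_mul]
    · exact mul_nonneg (hβnonneg _) hlt.le
  have hf_pos : 0 < (fderiv ℝ (β ∘ f) x₀).det := by
    rw [hcomp hf, hfx₀]
    exact mul_pos hβpos (hpos x₀ hx₀ hfx₀)
  refine hf_pos.ne ((hg_zero x₀ hx₀).symm.trans ?_)
  exact det_fderiv_eq_of_le_of_eqOn_compl hK (hβ.comp hf) (hβ.comp hg)
    (fun x hx => congrArg β (hfg hx)) (fun x hx => (hg_zero x hx).trans_le (hf_nonneg x hx)) x₀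

theorem exists_add_eq_zero_of_eqOn_compl (hK : IsCompact K) (hf : ContDiff ℝ 2 f) {u : V → V}
    (hu : Continuous u) (hu0 : ∀ x ∉ K, u x = 0)
    (hpos : ∀ x ∈ K, f x = 0 → 0 < (fderiv ℝ f x).det) (hx₀ : x₀ ∈ K) (hfx₀ : f x₀ = 0) :
    ∃ x ∈ K, f x + u x = 0 := by
  by_contra! hne
  obtain ⟨δ, hδ, hδ'⟩ := exists_pos_forall_le_norm hK (hf.continuous.add hu) hne
  obtain ⟨k, hk, hku, hsupp⟩ :=
    hu.exists_contDiff_approx 2 (continuous_const (y := δ)) fun _ => hδ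
  have hk0 : ∀ x ∉ K, k x = 0 := fun x hx =>
    Function.notMem_support.1 fun hkx => hsupp hkx (hu0 x hx)
  obtain ⟨x, hx, hfk⟩ := exists_eq_zero_of_contDiff_of_eqOn_compl hK hf (hf.add hk)
    (fun x hx => by simp [hk0 x hx]) hpos hx₀ hfx₀
  refine (hku x).not_ge ((hδ' x hx).trans_eq ?_)
  rw [dist_comm, dist_eq_norm, eq_neg_of_add_eq_zero_right hfk, sub_neg_eq_add, add_comm]
  rfl

theorem exists_contDiff_eventuallyEq {E F : Type*} [NormedAddCommGroup E] [NormedSpace ℝ E]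
    [FiniteDimensional ℝ E] [NormedAddCommGroup F] [NormedSpace ℝ F] {n : ℕ} {K : Set E}
    (hK : IsClosed K) {f : E → F} (hf : ∀ x ∈ K, ContDiffAt ℝ n f x) :
    ∃ g : E → F, ContDiff ℝ n g ∧ ∀ x ∈ K, g =ᶠ[𝓝 x] f := by
  have hU : IsOpen {x | ContDiffAt ℝ n f x} :=
    isOpen_iff_mem_nhds.2 fun x (hx : ContDiffAt ℝ n f x) => hx.eventually (by simp)
  obtain ⟨W, hW, hKW, hWU⟩ := normal_exists_closure_subset hK hU hf
  obtain ⟨χ, hχ1, hχ0, -⟩ := exists_contMDiffMap_one_nhds_of_subset_interior (n := n)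
    (modelWithCornersSelf ℝ E) hK (hKW.trans (interior_maximal subset_closure hW))
  refine ⟨fun x => χ x • f x, contDiff_iff_contDiffAt.2 fun x => ?_, fun x hx => ?_⟩
  · by_cases hx : x ∈ closure W
    · exact χ.contMDiff.contDiff.contDiffAt.smul (hWU hx)
    · refine contDiffAt_const (c := 0) |>.congr_of_eventuallyEq ?_
      filter_upwards [isClosed_closure.isOpen_compl.mem_nhds hx] with y hy
      rw [hχ0 y hy, zero_smul]
  · filter_upwards [hχ1.filter_mono (nhds_le_nhdsSet hx)] with y hy
    rw [hy, one_smul]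

theorem exists_homotopy_eq_zero (hK : IsCompact K) (hf : ∀ x ∈ K, ContDiffAt ℝ 2 f x)
    (hpos : ∀ x ∈ K, f x = 0 → 0 < (fderiv ℝ f x).det) (hx₀ : x₀ ∈ K) (hfx₀ : f x₀ = 0)
    (H : C(unitInterval × K, V)) (hH0 : ∀ x, H (0, x) = f x)
    (hH : ∀ z, H z = 0 → (z.2 : V) ∈ interior K) : ∃ x, H (1, x) = 0 := by
  have : CompactSpace K := isCompact_iff_compactSpace.1 hK
  let A : Set V := (fun z => (z.2 : V)) '' (H ⁻¹' {0})
  have hA : IsClosed A := ((isClosed_singleton.preimage H.continuous).isCompact.image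
    (continuous_subtype_val.comp continuous_snd)).isClosed
  have hAK : Disjoint (interior K)ᶜ A := by
    rw [disjoint_compl_left_iff_subset]
    rintro _ ⟨z, hz, rfl⟩
    exact hH z hz
  obtain ⟨τ, hτ0, hτ1, hτ⟩ :=
    exists_continuous_zero_one_of_isClosed isOpen_interior.isClosed_compl hA hAK
  obtain ⟨g, hg, hgf⟩ := exists_contDiff_eventuallyEq (n := 2) hK.isClosed hf
  let u₀ : C(K, V) :=
    { toFun := fun x => H (⟨τ x, hτ x⟩, x) - g x
      continuous_toFun := by have := hg.continuous; fun_prop }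
  obtain ⟨u, hu⟩ := u₀.exists_restrict_eq hK.isClosed
  replace hu (x : K) : u x = H (⟨τ x, hτ x⟩, x) - g x := DFunLike.congr_fun hu x
  have hu_frontier : ∀ x ∈ frontier K, u x = 0 := fun x hx => by
    have hxK : x ∈ K := hK.isClosed.frontier_subset hx
    have hτx : (⟨τ x, hτ x⟩ : unitInterval) = 0 := Subtype.ext (hτ0 hx.2)
    rw [hu ⟨x, hxK⟩, hτx, hH0, (hgf x hxK).eq_of_nhds, sub_self]
  have hg_pos : ∀ x ∈ K, g x = 0 → 0 < (fderiv ℝ g x).det := fun x hx h0 => by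
    rw [(hgf x hx).fderiv_eq]
    exact hpos x hx ((hgf x hx).eq_of_nhds ▸ h0)
  obtain ⟨x, hx, hgx⟩ := exists_add_eq_zero_of_eqOn_compl hK hg
    (continuous_indicator hu_frontier u.continuous.continuousOn)
    (fun x hx => indicator_of_notMem hx u)
    hg_pos hx₀ ((hgf x₀ hx₀).eq_of_nhds.trans hfx₀)
  rw [indicator_of_mem hx, hu ⟨x, hx⟩, add_sub_cancel] at hgx
  have hτx : (⟨τ x, hτ x⟩ : unitInterval) = 1 := Subtype.ext (hτ1 ⟨_, hgx, rfl⟩)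
  exact ⟨⟨x, hx⟩, hτx ▸ hgx⟩

end Degree

theorem det_pos_of_forall_segment_injective {V : Type*} [AddCommGroup V] [Module ℝ V]
    [FiniteDimensional ℝ V] {L : V →ₗ[ℝ] V}
    (h : ∀ s ∈ unitInterval, ∀ v, (1 - s) • v + s • L v = 0 → v = 0) : 0 < LinearMap.det L := by
  let b := Module.finBasis ℝ V
  let D : ℝ → ℝ := fun s => LinearMap.det ((1 - s) • LinearMap.id + s • L)
  have hD : Continuous D := by
    have hmatrix : D = fun s =>
        ((1 - s) • (1 : Matrix _ _ ℝ) + s • LinearMap.toMatrix b b L).det := by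
      ext s
      simp only [D, ← LinearMap.det_toMatrix b]
      simp
    rw [hmatrix]
    fun_prop
  have hne : ∀ s ∈ unitInterval, D s ≠ 0 := fun s hs h0 => by
    obtain ⟨v, hv, hv0⟩ :=
      (Submodule.ne_bot_iff _).1 (LinearMap.bot_lt_ker_of_det_eq_zero h0).ne'
    exact hv0 (h s hs v (by simpa using hv))
  have hD0 : D 0 = 1 := by simp [D]
  have hD1 : D 1 = LinearMap.det L := by simp [D]
  by_contra! hle
  obtain ⟨s, hs, hs0⟩ := intermediate_value_Icc' zero_le_one hD.continuousOn
    ⟨hD1.trans_le hle, hD0 ▸ zero_le_one⟩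
  exact hne s hs hs0

theorem det_pos_of_forall_exists_dual_pos {V : Type*} [AddCommGroup V] [Module ℝ V]
    [FiniteDimensional ℝ V] {L : V →ₗ[ℝ] V}
    (h : ∀ v ≠ 0, ∃ φ : Module.Dual ℝ V, 0 < φ v ∧ 0 < φ (L v)) : 0 < LinearMap.det L := by
  refine det_pos_of_forall_segment_injective fun s hs v hv => ?_
  by_contra hv0
  obtain ⟨φ, hφv, hφL⟩ := h v hv0
  have hφ : (1 - s) * φ v + s * φ (L v) = 0 := by
    simpa only [map_add, map_smul, smul_eq_mul, map_zero] using congrArg φ hv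
  obtain h1 | h1 := hs.2.lt_or_eq
  · nlinarith [mul_pos (sub_pos.2 h1) hφv, mul_nonneg hs.1 hφL.le]
  · rw [h1] at hφ
    linarith

section RadialProjection

open Metric

variable {E : Type*} [NormedAddCommGroup E] [NormedSpace ℝ E]

/-- The retraction `x ↦ ‖x‖⁻¹ • x` of a punctured normed space onto its unit sphere. -/
noncomputable def radialProjection : C(({0}ᶜ : Set E), sphere (0 : E) 1) where
  toFun x := ⟨‖(x : E)‖⁻¹ • (x : E), by
    rw [mem_sphere_zero_iff_norm, norm_smul, norm_inv, norm_norm,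
      inv_mul_cancel₀ (norm_ne_zero_iff.2 x.2)]⟩
  continuous_toFun := by
    refine ((Continuous.inv₀ ?_ fun x => norm_ne_zero_iff.2 x.2).smul ?_).subtype_mk _ <;> fun_prop

theorem coe_radialProjection (x : ({0}ᶜ : Set E)) :
    (radialProjection x : E) = ‖(x : E)‖⁻¹ • (x : E) :=
  rfl

theorem radialProjection_eq_iff {x : ({0}ᶜ : Set E)} {z : sphere (0 : E) 1} :
    radialProjection x = z ↔ (x : E) = ‖(x : E)‖ • (z : E) := by
  rw [Subtype.ext_iff, coe_radialProjection, inv_smul_eq_iff₀ (norm_ne_zero_iff.2 x.2)]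

theorem radialProjection_coe (z : sphere (0 : E) 1) :
    radialProjection ⟨(z : E), ne_zero_of_mem_unit_sphere z⟩ = z := by
  rw [radialProjection_eq_iff, norm_eq_of_mem_sphere, one_smul]

end RadialProjection

section FixedPoints

open Metric Set

variable {ι E : Type*} [NormedAddCommGroup E]

theorem isCompact_norm_preimage_Icc [ProperSpace E] (a b : ℝ) :
    IsCompact (norm ⁻¹' Icc a b : Set E) :=
  (isCompact_closedBall 0 b).of_isClosed_subset (isClosed_Icc.preimage continuous_norm)
    fun _ hx => mem_closedBall_zero_iff.2 hx.2

theorem coe_sphere_mem_interior_pi_norm_preimage_Icc [Finite ι] {a b : ℝ} (ha : a < 1)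
    (hb : 1 < b) (z : ι → sphere (0 : E) 1) :
    (fun j => (z j : E)) ∈ interior (univ.pi fun _ => norm ⁻¹' Icc a b) :=
  mem_interior_iff_mem_nhds.2 (set_pi_mem_nhds finite_univ fun j _ =>
    continuous_norm.continuousAt.preimage_mem_nhds
      ((norm_eq_of_mem_sphere (z j)).symm ▸ Icc_mem_nhds ha hb))

variable [NormedSpace ℝ E] [FiniteDimensional ℝ E]

theorem exists_fixedPoint_of_homotopic [Fintype ι]
    {G₀ G₁ : C(ι → sphere (0 : E) 1, ι → sphere (0 : E) 1)} (h : G₀.Homotopic G₁)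
    {f : (ι → E) → ι → E} (hf : ∀ x, (∀ j, x j ≠ 0) → ContDiffAt ℝ 2 f x)
    (hfG : ∀ (x : ι → E) (hx : ∀ j, x j ≠ 0) (j : ι),
      f x j = x j - G₀ (fun k => radialProjection ⟨x k, hx k⟩) j)
    (hpos : ∀ z, G₀ z = z → 0 < (fderiv ℝ f fun j => (z j : E)).det)
    (hfix : ∃ z, G₀ z = z) : ∃ z, G₁ z = z := by
  obtain ⟨F⟩ := h
  let K : Set (ι → E) := univ.pi fun _ => norm ⁻¹' Icc (1 / 2) 2
  have hK : IsCompact K := isCompact_univ_pi fun _ => isCompact_norm_preimage_Icc _ _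
  have hK0 (x : K) (j : ι) : (x : ι → E) j ≠ 0 :=
    norm_pos_iff.1 (one_half_pos.trans_le (x.2 j trivial).1)
  have hsphere (z : ι → sphere (0 : E) 1) : (fun j => (z j : E)) ∈ interior K :=
    coe_sphere_mem_interior_pi_norm_preimage_Icc one_half_lt_one one_lt_two z
  let N : C(K, ι → sphere (0 : E) 1) :=
    { toFun := fun x j => radialProjection ⟨(x : ι → E) j, hK0 x j⟩
      continuous_toFun := continuous_pi fun j => radialProjection.continuous.comp <|
        ((continuous_apply j).comp continuous_subtype_val).subtype_mk _ }
  let H : C(unitInterval × K, ι → E) :=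
    { toFun := fun q j => (q.2 : ι → E) j - F (q.1, N q.2) j
      continuous_toFun := continuous_pi fun j => by
        have hF : Continuous fun q : unitInterval × K => F (q.1, N q.2) := by fun_prop
        have hx : Continuous fun q : unitInterval × K => (q.2 : ι → E) := by fun_prop
        exact (continuous_pi_iff.1 hx j).sub
          (continuous_subtype_val.comp (continuous_pi_iff.1 hF j)) }
  have hzero {t : unitInterval} {x : K} (h0 : H (t, x) = 0) :
      F (t, N x) = N x ∧ (x : ι → E) = fun j => (N x j : E) := by
    have hx : (x : ι → E) = fun j => (F (t, N x) j : E) := sub_eq_zero.1 h0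
    have hN : N x = F (t, N x) := funext fun j => by
      rw [← radialProjection_coe (F (t, N x) j)]
      exact congrArg radialProjection (Subtype.ext (congrFun hx j))
    exact ⟨hN.symm, hx.trans (by rw [← hN])⟩
  have hH0 (x : K) : H (0, x) = f x := funext fun j => by
    rw [hfG x (hK0 x)]
    exact congrArg (fun y => (x : ι → E) j - (y j : E)) (F.apply_zero (N x))
  obtain ⟨z, hz⟩ := hfix
  have hfz : f (fun j => (z j : E)) = 0 := funext fun j => by
    simp only [hfG _ fun j => ne_zero_of_mem_unit_sphere (z j), radialProjection_coe, hz, sub_self,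
      Pi.zero_apply]
  have hf_pos : ∀ x ∈ K, f x = 0 → 0 < (fderiv ℝ f x).det := fun x hx h0 => by
    obtain ⟨hfix, hxN⟩ := hzero ((hH0 ⟨x, hx⟩).trans h0)
    rw [show x = _ from hxN]
    exact hpos _ ((F.apply_zero _).symm.trans hfix)
  obtain ⟨x, hx⟩ := exists_homotopy_eq_zero hK (fun x hx => hf x (hK0 ⟨x, hx⟩)) hf_pos
    (interior_subset (hsphere z)) hfz H hH0 (fun q hq => (hzero hq).2 ▸ hsphere _)
  exact ⟨N x, (F.apply_one _).symm.trans (hzero hx).1⟩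

theorem exists_fixedPoint_of_homotopic_const [Finite ι]
    {G : C(ι → sphere (0 : E) 1, ι → sphere (0 : E) 1)} (z₀ : ι → sphere (0 : E) 1)
    (h : (ContinuousMap.const _ z₀).Homotopic G) : ∃ z, G z = z := by
  have := Fintype.ofFinite ι
  refine exists_fixedPoint_of_homotopic h (f := fun x => x - fun j => (z₀ j : E))
    (fun _ _ => contDiffAt_id.sub contDiffAt_const) (fun _ _ _ => rfl) (fun z _ => ?_) ⟨z₀, rfl⟩
  rw [fderiv_sub_const, fderiv_fun_id]
  exact one_pos.trans_eq LinearMap.det_id.symm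

end FixedPoints

section NegSwap

open Metric

variable {E : Type*} [NormedAddCommGroup E]

/-- The self-map `(x, y) ↦ (-y, -ρ x)` of `S^ι × S^ι`, written as a product indexed by `ι ⊕ ι`. -/
def negSwap (ι : Type*) (ρ : C(sphere (0 : E) 1, sphere (0 : E) 1)) :
    C(ι ⊕ ι → sphere (0 : E) 1, ι ⊕ ι → sphere (0 : E) 1) where
  toFun z := Sum.elim (fun i => -z (.inr i)) fun i => -ρ (z (.inl i))
  continuous_toFun := continuous_pi <| by rintro (i | i) <;> simp only [Sum.elim] <;> fun_prop

theorem negSwap_homotopic (ι : Type*) {ρ₀ ρ₁ : C(sphere (0 : E) 1, sphere (0 : E) 1)}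
    (h : ρ₀.Homotopic ρ₁) : (negSwap ι ρ₀).Homotopic (negSwap ι ρ₁) :=
  h.map fun F =>
    { toFun := fun q => Sum.elim (fun i => -q.2 (.inr i)) fun i => -F (q.1, q.2 (.inl i))
      continuous_toFun :=
        continuous_pi <| by rintro (i | i) <;> simp only [Sum.elim] <;> fun_prop
      map_zero_left := fun z => by simp only [F.apply_zero]; rfl
      map_one_left := fun z => by simp only [F.apply_one]; rfl }

variable [InnerProductSpace ℝ E]

/-- The restriction of a linear isometry to the unit sphere. -/
def unitSphereMap (R : E →ₗᵢ[ℝ] E) : C(sphere (0 : E) 1, sphere (0 : E) 1) where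
  toFun x := ⟨R x, by rw [mem_sphere_zero_iff_norm, R.norm_map, norm_eq_of_mem_sphere]⟩

theorem hasFDerivAt_inv_norm_smul {x : E} (hx : ‖x‖ = 1) :
    HasFDerivAt (fun y : E => ‖y‖⁻¹ • y) (ℝ ∙ x)ᗮ.starProjection x := by
  have hnorm : HasFDerivAt (fun y : E => ‖y‖) (innerSL ℝ x) x := by
    have hsqrt := (hasStrictFDerivAt_norm_sq x).hasFDerivAt.sqrt (by simp [hx])
    simp only [Real.sqrt_sq (norm_nonneg _), hx] at hsqrt
    exact hsqrt.congr_fderiv (by ext v; simp)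
  have hinv := (hasDerivAt_inv (hx.trans_ne one_ne_zero)).comp_hasFDerivAt x hnorm
  refine (hinv.smul (hasFDerivAt_id x)).congr_fderiv ?_
  ext v
  simp [Submodule.starProjection_orthogonal_val, Submodule.starProjection_unit_singleton ℝ hx,
    hx, sub_eq_add_neg]

theorem contDiffAt_inv_norm_smul {n : ℕ∞ω} {x : E} (hx : x ≠ 0) :
    ContDiffAt ℝ n (fun y : E => ‖y‖⁻¹ • y) x :=
  ((contDiffAt_norm ℝ hx).inv (norm_ne_zero_iff.2 hx)).smul contDiffAt_id

variable {ι : Type*}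

/-- The extension `x - (negSwap ι ρ) (x / ‖x‖)` of the displacement of `negSwap ι ρ` to tuples of
nonzero vectors, where `ρ` is the restriction to the sphere of the linear map `R`. -/
noncomputable def negSwapDisplacement (R : E →L[ℝ] E) (x : ι ⊕ ι → E) : ι ⊕ ι → E :=
  Sum.elim (fun i => x (.inl i) + ‖x (.inr i)‖⁻¹ • x (.inr i))
    fun i => x (.inr i) + R (‖x (.inl i)‖⁻¹ • x (.inl i))

theorem contDiffAt_negSwapDisplacement [Fintype ι] {n : ℕ∞ω} (R : E →L[ℝ] E)
    {x : ι ⊕ ι → E} (hx : ∀ k, x k ≠ 0) : ContDiffAt ℝ n (negSwapDisplacement R) x := by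
  have hpr (k : ι ⊕ ι) : ContDiffAt ℝ n (fun y : ι ⊕ ι → E => ‖y k‖⁻¹ • y k) x :=
    (contDiffAt_inv_norm_smul (hx k)).comp x (contDiff_apply ℝ E k).contDiffAt
  rw [contDiffAt_pi]
  rintro (i | i)
  · exact (contDiff_apply ℝ E _).contDiffAt.add (hpr _)
  · exact (contDiff_apply ℝ E _).contDiffAt.add (R.contDiff.contDiffAt.comp x (hpr _))

theorem hasFDerivAt_negSwapDisplacement [Finite ι] (R : E →L[ℝ] E) {x : ι ⊕ ι → E}
    (hx : ∀ k, ‖x k‖ = 1) :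
    HasFDerivAt (negSwapDisplacement R) (ContinuousLinearMap.pi <| Sum.elim
      (fun i => .proj (.inl i) + (ℝ ∙ x (.inr i))ᗮ.starProjection ∘L .proj (.inr i))
      fun i => .proj (.inr i) + R ∘L (ℝ ∙ x (.inl i))ᗮ.starProjection ∘L .proj (.inl i)) x := by
  have := Fintype.ofFinite ι
  have hpr (k : ι ⊕ ι) : HasFDerivAt (fun y : ι ⊕ ι → E => ‖y k‖⁻¹ • y k)
      ((ℝ ∙ x k)ᗮ.starProjection ∘L .proj k) x :=
    (hasFDerivAt_inv_norm_smul (hx k)).comp (f := fun y : ι ⊕ ι → E => y k) x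
      (hasFDerivAt_apply k x)
  rw [hasFDerivAt_pi']
  rintro (i | i)
  · exact (hasFDerivAt_apply _ x).add (hpr _)
  · exact (hasFDerivAt_apply _ x).add (R.hasFDerivAt.comp x (hpr _))

theorem reflection_starProjection_orthogonal_of_reflection_eq_self {p x : E} (hx : x ≠ 0)
    (hpx : (ℝ ∙ p).reflection x = x) (v : E) :
    (ℝ ∙ p).reflection ((ℝ ∙ x)ᗮ.starProjection v) = -(ℝ ∙ x)ᗮ.starProjection v := by
  obtain ⟨c, rfl⟩ :=
    Submodule.mem_span_singleton.1 (((ℝ ∙ p).reflection_eq_self_iff x).1 hpx)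
  exact Submodule.reflection_mem_subspace_orthogonalComplement_eq_neg
    (Submodule.orthogonal_le
      (Submodule.span_singleton_smul_eq (left_ne_zero_of_smul hx).isUnit p).ge
      (Submodule.starProjection_apply_mem _ v))

theorem det_fderiv_negSwapDisplacement_pos [Finite ι] [FiniteDimensional ℝ E] {p : E}
    {x : ι ⊕ ι → E} (hx : ∀ k, ‖x k‖ = 1) (hxx : ∀ i, x (.inr i) = -x (.inl i))
    (hpx : ∀ i, (ℝ ∙ p).reflection (x (.inl i)) = x (.inl i)) :
    0 < (fderiv ℝ (negSwapDisplacement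
      ((ℝ ∙ p).reflection.toContinuousLinearEquiv : E →L[ℝ] E)) x).det := by
  rw [(hasFDerivAt_negSwapDisplacement _ hx).fderiv]
  refine det_pos_of_forall_exists_dual_pos fun v hv => ?_
  obtain ⟨i, hi⟩ : ∃ i, 0 < ‖v (.inl i)‖ ^ 2 + ‖v (.inr i)‖ ^ 2 := by
    obtain ⟨i | i, hi⟩ := Function.ne_iff.1 hv <;> have := norm_pos_iff.2 hi
    · exact ⟨i, by positivity⟩
    · exact ⟨i, by positivity⟩
  let φ : Module.Dual ℝ (ι ⊕ ι → E) :=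
    (innerₛₗ ℝ (v (.inl i))).comp (.proj (.inl i)) + (innerₛₗ ℝ (v (.inr i))).comp (.proj (.inr i))
  refine ⟨φ, ?_, ?_⟩
  · exact hi.trans_eq (congrArg₂ _ (real_inner_self_eq_norm_sq _)
      (real_inner_self_eq_norm_sq _)).symm
  · let P := (ℝ ∙ x (.inl i))ᗮ.starProjection
    have hspan : (ℝ ∙ x (.inr i)) = (ℝ ∙ x (.inl i)) := by
      rw [hxx, ← Set.neg_singleton, Submodule.span_neg]
    have hP : (ℝ ∙ x (.inr i))ᗮ.starProjection (v (.inr i)) = P (v (.inr i)) := by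
      simp only [hspan, P]
    have hRP : (ℝ ∙ p).reflection (P (v (.inl i))) = -P (v (.inl i)) :=
      reflection_starProjection_orthogonal_of_reflection_eq_self
        (norm_ne_zero_iff.1 ((hx _).trans_ne one_ne_zero)) (hpx i) _
    calc 0 < ‖v (.inl i)‖ ^ 2 + ‖v (.inr i)‖ ^ 2 := hi
      _ = ⟪v (.inl i), v (.inl i) + P (v (.inr i))⟫_ℝ
          + ⟪v (.inr i), v (.inr i) - P (v (.inl i))⟫_ℝ := by
        rw [inner_add_right, inner_sub_right, ← Submodule.inner_starProjection_left_eq_right,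
          real_inner_comm (P _), real_inner_self_eq_norm_sq, real_inner_self_eq_norm_sq]
        ring
      _ = φ _ := by rw [sub_eq_add_neg, ← hRP, ← hP]; rfl

theorem exists_fixedPoint_of_homotopic_negSwap [Finite ι] [FiniteDimensional ℝ E] {p : E}
    (hp : ‖p‖ = 1)
    (hR : (unitSphereMap (ℝ ∙ p).reflection.toLinearIsometry).Homotopic (.id _))
    {G : C(ι ⊕ ι → sphere (0 : E) 1, ι ⊕ ι → sphere (0 : E) 1)}
    (h : (negSwap ι (.id _)).Homotopic G) : ∃ z, G z = z := by
  have := Fintype.ofFinite ι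
  refine exists_fixedPoint_of_homotopic ((negSwap_homotopic ι hR).trans h)
    (fun x hx => contDiffAt_negSwapDisplacement
      ((ℝ ∙ p).reflection.toContinuousLinearEquiv : E →L[ℝ] E) hx) ?_ (fun z hz => ?_) ?_
  · rintro x hx (i | i)
    · exact (sub_neg_eq_add (x (.inl i)) (radialProjection ⟨x (.inr i), hx _⟩ : E)).symm
    · exact (sub_neg_eq_add (x (.inr i))
        ((ℝ ∙ p).reflection (radialProjection ⟨x (.inl i), hx _⟩ : E))).symm
  · have hzz (i : ι) : (z (.inr i) : E) = -z (.inl i) :=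
      neg_eq_iff_eq_neg.1 (congrArg Subtype.val (congrFun hz (.inl i)))
    refine det_fderiv_negSwapDisplacement_pos (fun k => norm_eq_of_mem_sphere (z k)) hzz fun i => ?_
    exact neg_injective ((congrArg Subtype.val (congrFun hz (.inr i))).trans (hzz i))
  · let e : sphere (0 : E) 1 := ⟨p, mem_sphere_zero_iff_norm.2 hp⟩
    refine ⟨Sum.elim (fun _ => e) fun _ => -e, funext ?_⟩
    rintro (_ | _)
    · exact neg_neg e
    · exact congrArg Neg.neg (Subtype.ext (Submodule.reflection_mem_subspace_eq_self
        (Submodule.mem_span_singleton_self p)))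

end NegSwap

section MotionPlanner

open scoped unitInterval

variable {X : Type*} [TopologicalSpace X]

/-- A set of pairs of points carries a continuous choice of a path joining each pair. -/
def HasMotionPlanner (U : Set (X × X)) : Prop :=
  ∃ s : C(U, C(I, X)), ∀ z : U, s z 0 = (z : X × X).1 ∧ s z 1 = (z : X × X).2

theorem hasMotionPlanner_iff_homotopic {U : Set (X × X)} : HasMotionPlanner U ↔
    (ContinuousMap.fst.restrict U).Homotopic (ContinuousMap.snd.restrict U) := by
  constructor
  · rintro ⟨s, hs⟩
    exact ⟨{
      toFun := fun q => s q.2 q.1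
      map_zero_left := fun z => (hs z).1
      map_one_left := fun z => (hs z).2 }⟩
  · rintro ⟨F⟩
    exact ⟨(F.toContinuousMap.comp .prodSwap).curry, fun z => ⟨F.apply_zero z, F.apply_one z⟩⟩

theorem HasMotionPlanner.mono {U V : Set (X × X)} (hV : HasMotionPlanner V) (hUV : U ⊆ V) :
    HasMotionPlanner U := by
  obtain ⟨s, hs⟩ := hV
  exact ⟨s.comp (.inclusion hUV), fun z => hs _⟩

theorem HasMotionPlanner.homotopic_restrict_preimage {U : Set (X × X)} (hU : HasMotionPlanner U)
    {M : Type*} [TopologicalSpace M] (f : C(M, X × X)) :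
    ((ContinuousMap.fst.comp f).restrict (f ⁻¹' U)).Homotopic
      ((ContinuousMap.snd.comp f).restrict (f ⁻¹' U)) :=
  (hasMotionPlanner_iff_homotopic.1 hU).comp (.refl (f.restrictPreimage U))

end MotionPlanner

section LowerBound

open scoped unitInterval

variable {M S : Type*} [TopologicalSpace M] [TopologicalSpace S]

-- The homotopy `F` is run only up to time `u`, which vanishes away from `C`, so that it extends
-- from `U` to the whole space by the constant homotopy.
theorem exists_homotopic_forall_mem_eq {U C : Set M} (hU : IsOpen U) (hC : IsClosed C)
    (hCU : C ⊆ U) {a b : C(M, S)} (F : (a.restrict U).Homotopy (b.restrict U)) (u : C(M, I))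
    (hu : ∀ z ∉ C, u z = 0) :
    ∃ g, a.Homotopic g ∧ ∀ (z : M) (hz : z ∈ U), g z = F (u z, ⟨z, hz⟩) := by
  classical
  let H (q : I × M) : S := if hq : q.2 ∈ U then F (q.1 * u q.2, ⟨q.2, hq⟩) else a q.2
  have hHU {q : I × M} (hq : q.2 ∈ U) : H q = F (q.1 * u q.2, ⟨q.2, hq⟩) := dif_pos hq
  have hH0 {q : I × M} (hq : q.1 * u q.2 = 0) : H q = a q.2 := by
    by_cases hqU : q.2 ∈ U
    · rw [hHU hqU, hq]
      exact F.apply_zero _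
    · exact dif_neg hqU
  have hcontU : ContinuousOn H (Prod.snd ⁻¹' U) := by
    rw [continuousOn_iff_continuous_domRestrict]
    have hF : Continuous fun q : Prod.snd ⁻¹' U => F (q.1.1 * u q.1.2, ⟨q.1.2, q.2⟩) := by fun_prop
    exact hF.congr fun q => (hHU q.2).symm
  have hcontC : ContinuousOn H (Prod.snd ⁻¹' Cᶜ) :=
    (a.continuous.comp continuous_snd).continuousOn.congr fun q hq =>
      hH0 (by rw [hu _ hq, mul_zero])
  have hcont : Continuous H := by
    rw [← continuousOn_univ]
    refine (hcontU.union_of_isOpen hcontC (hU.preimage continuous_snd)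
      (hC.isOpen_compl.preimage continuous_snd)).mono fun q _ => ?_
    exact (em (q.2 ∈ C)).imp_left fun h => hCU h
  refine ⟨⟨fun z => H (1, z), by fun_prop⟩, ⟨{
    toFun := H
    map_zero_left := fun z => hH0 (zero_mul _)
    map_one_left := fun z => rfl }⟩, fun z hz => (hHU hz).trans ?_⟩
  simp only [one_mul]

variable [NormalSpace M]

theorem exists_homotopic_eqOn {U K : Set M} (hU : IsOpen U) (hK : IsClosed K) (hKU : K ⊆ U)
    {a b : C(M, S)} (h : (a.restrict U).Homotopic (b.restrict U)) :
    ∃ g, a.Homotopic g ∧ Set.EqOn g b K := by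
  obtain ⟨F⟩ := h
  obtain ⟨W, hW, hKW, hWU⟩ := normal_exists_closure_subset hK hU hKU
  obtain ⟨τ, hτ0, hτ1, hτ⟩ := exists_continuous_zero_one_of_isClosed hW.isClosed_compl hK
    (Set.disjoint_compl_left_iff_subset.2 hKW)
  let u : C(M, I) := ⟨fun z => ⟨τ z, hτ z⟩, by fun_prop⟩
  have hu0 (z : M) (hz : z ∉ closure W) : u z = 0 :=
    Subtype.ext (hτ0 fun h => hz (subset_closure h))
  obtain ⟨g, hag, hg⟩ := exists_homotopic_forall_mem_eq hU isClosed_closure hWU F u hu0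
  refine ⟨g, hag, fun z hz => ?_⟩
  rw [hg z (hKU hz), show u z = 1 from Subtype.ext (hτ1 hz)]
  exact F.apply_one _

theorem exists_homotopic_pi_forall_exists_eq {κ : Type*} [Finite κ] {U : κ → Set M}
    (hU : ∀ j, IsOpen (U j)) (hcov : ⋃ j, U j = Set.univ) {a b : κ → C(M, S)}
    (h : ∀ j, ((a j).restrict (U j)).Homotopic ((b j).restrict (U j))) :
    ∃ G : C(M, κ → S), (ContinuousMap.pi a).Homotopic G ∧ ∀ z, ∃ j, G z j = b j z := by
  obtain ⟨K, hKcov, hK, hKU⟩ := exists_iUnion_eq_closed_subset hU (fun _ => Set.toFinite _) hcov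
  choose g hg hgb using fun j => exists_homotopic_eqOn (hU j) (hK j) (hKU j) (h j)
  refine ⟨.pi g, .pi hg, fun z => ?_⟩
  obtain ⟨j, hj⟩ := Set.mem_iUnion.1 (hKcov.symm ▸ Set.mem_univ z : z ∈ ⋃ j, K j)
  exact ⟨j, hgb j hj⟩

theorem card_le_topComplexity {X : Type*} [TopologicalSpace X] {κ : Type*} [Fintype κ]
    (h : ∀ U : κ → Set (X × X), (∀ j, IsOpen (U j)) → ⋃ j, U j = Set.univ →
      ∃ j, ¬ HasMotionPlanner (U j)) :
    (Fintype.card κ : ℕ∞) ≤ topComplexity X := by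
  refine le_sInf ?_
  rintro _ ⟨m, rfl, U, hU, hcov, hs⟩
  by_contra! hlt
  obtain ⟨e⟩ : Nonempty (Fin (m + 1) ↪ κ) :=
    Function.Embedding.nonempty_of_card_le ((Fintype.card_fin _).trans_le (Nat.cast_lt.1 hlt))
  have he := Function.invFun_surjective e.injective
  obtain ⟨j, hj⟩ := h (fun j => U (Function.invFun e j)) (fun j => hU _)
    ((he.iUnion_comp U).trans hcov)
  exact hj (hs _)

theorem card_le_topComplexity_of_homotopic_pi {X : Type*} [TopologicalSpace X]
    {κ : Type*} [Fintype κ] (f : C(M, X × X)) (a b : κ → C(M, S))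
    (hab : ∀ V : Set M, ((ContinuousMap.fst.comp f).restrict V).Homotopic
      ((ContinuousMap.snd.comp f).restrict V) →
        ∀ j, ((a j).restrict V).Homotopic ((b j).restrict V))
    (hG : ∀ G, (ContinuousMap.pi a).Homotopic G → ∃ z, ∀ j, G z j ≠ b j z) :
    (Fintype.card κ : ℕ∞) ≤ topComplexity X := by
  refine card_le_topComplexity fun U hU hcov => ?_
  by_contra! hs
  obtain ⟨G, hGa, hGb⟩ := exists_homotopic_pi_forall_exists_eq
    (fun j => (hU j).preimage f.continuous) (by rw [← Set.preimage_iUnion, hcov, Set.preimage_univ])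
    (fun j => hab _ ((hs j).homotopic_restrict_preimage f) j)
  obtain ⟨z, hz⟩ := hG G hGa
  obtain ⟨j, hj⟩ := hGb z
  exact hz j hj

end LowerBound

section SphereLowerBound

open Metric

variable {E : Type*} [NormedAddCommGroup E]

/-- The map `z ↦ -z j` from a power of the unit sphere. -/
def negEval {κ : Type*} (j : κ) : C(κ → sphere (0 : E) 1, sphere (0 : E) 1) :=
  ⟨fun z => -z j, by fun_prop⟩

theorem card_le_topComplexity_of_fixedPoint [NormedSpace ℝ E] [FiniteDimensional ℝ E]
    {X κ : Type*} [TopologicalSpace X] [Fintype κ] (f : C(κ → sphere (0 : E) 1, X × X))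
    (a : κ → C(κ → sphere (0 : E) 1, sphere (0 : E) 1))
    (hab : ∀ V : Set (κ → sphere (0 : E) 1), ((ContinuousMap.fst.comp f).restrict V).Homotopic
      ((ContinuousMap.snd.comp f).restrict V) →
        ∀ j, ((a j).restrict V).Homotopic ((negEval j).restrict V))
    (hfix : ∀ G, (ContinuousMap.pi a).Homotopic G → ∃ z, G z = z) :
    (Fintype.card κ : ℕ∞) ≤ topComplexity X := by
  refine card_le_topComplexity_of_homotopic_pi f a negEval hab fun G hG => ?_
  obtain ⟨z, hz⟩ := hfix G hG
  exact ⟨z, fun j hj => ne_neg_of_mem_unit_sphere ℝ (z j) ((congrFun hz j).symm.trans hj)⟩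

theorem card_le_topComplexity_pi_sphere [NormedSpace ℝ E] [FiniteDimensional ℝ E] [Nontrivial E]
    (ι : Type*) [Fintype ι] : (Fintype.card ι : ℕ∞) ≤ topComplexity (ι → sphere (0 : E) 1) := by
  obtain ⟨p, hp⟩ := (NormedSpace.sphere_nonempty (x := (0 : E))).2 zero_le_one
  let z₀ : ι → sphere (0 : E) 1 := fun _ => ⟨p, hp⟩
  refine card_le_topComplexity_of_fixedPoint (.prodMk (.const _ z₀) (.pi negEval))
    (fun j => .const _ (z₀ j)) (fun V h j => ?_) fun G => exists_fixedPoint_of_homotopic_const z₀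
  exact (ContinuousMap.Homotopic.refl (ContinuousMap.eval j)).comp h

theorem two_mul_card_le_topComplexity_pi_sphere [InnerProductSpace ℝ E] [FiniteDimensional ℝ E]
    {p : E} (hp : ‖p‖ = 1)
    (hR : (unitSphereMap (ℝ ∙ p).reflection.toLinearIsometry).Homotopic (.id _))
    (ι : Type*) [Fintype ι] :
    ((2 * Fintype.card ι : ℕ) : ℕ∞) ≤ topComplexity (ι → sphere (0 : E) 1) := by
  rw [two_mul, ← Fintype.card_sum]
  refine card_le_topComplexity_of_fixedPoint
    (.prodMk (.pi fun i => negEval (.inl i)) (.pi fun i => negEval (.inr i)))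
    (Sum.elim (fun i => negEval (.inr i)) fun i => negEval (.inl i)) (fun V h => ?_) fun G hG => ?_
  · have hi (i : ι) : ((negEval (.inl i)).restrict V).Homotopic ((negEval (.inr i)).restrict V) :=
      (ContinuousMap.Homotopic.refl (ContinuousMap.eval i)).comp h
    exact Sum.rec (fun i => (hi i).symm) hi
  · have heq : negSwap ι (.id (sphere (0 : E) 1)) =
        .pi (Sum.elim (fun i => negEval (.inr i)) fun i => negEval (.inl i)) := by
      ext z (i | i) <;> rfl
    exact exists_fixedPoint_of_homotopic_negSwap hp hR (heq ▸ hG)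

end SphereLowerBound

section ProductInequality

open scoped NNReal unitInterval

theorem topComplexity_le {X : Type*} [TopologicalSpace X] {m : ℕ} {U : Fin (m + 1) → Set (X × X)}
    (hU : ∀ i, IsOpen (U i)) (hcov : ⋃ i, U i = Set.univ) (hs : ∀ i, HasMotionPlanner (U i)) :
    topComplexity X ≤ m :=
  sInf_le ⟨m, rfl, U, hU, hcov, hs⟩

theorem exists_cover_of_topComplexity_eq {X : Type*} [TopologicalSpace X] {m : ℕ}
    (h : topComplexity X = m) : ∃ U : Fin (m + 1) → Set (X × X),
      (∀ i, IsOpen (U i)) ∧ ⋃ i, U i = Set.univ ∧ ∀ i, HasMotionPlanner (U i) := by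
  have hne : topComplexity X ≠ ⊤ := h.trans_ne (ENat.natCast_ne_top m)
  obtain ⟨m', hm', hU⟩ := csInf_mem <| Set.nonempty_iff_ne_empty.2 fun h0 =>
    hne ((congrArg sInf h0).trans sInf_empty)
  obtain rfl : m = m' := ENat.natCast_inj.1 (h.symm.trans hm')
  exact hU

theorem exists_support_cover_of_topComplexity_eq {X : Type*} [TopologicalSpace X]
    [PerfectlyNormalSpace (X × X)] {m : ℕ} (h : topComplexity X = m) :
    ∃ l : Fin (m + 1) → C(X × X, ℝ≥0), (∀ z, ∃ a, l a z ≠ 0) ∧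
      ∀ a, HasMotionPlanner (Function.support (l a)) := by
  obtain ⟨U, hU, hcov, hs⟩ := exists_cover_of_topComplexity_eq h
  choose g hg hgI using fun a => perfectlyNormalSpace_iff_forall_isClosed_preimage_zero.1 ‹_› _
    (hU a).isClosed_compl
  have hsupp (a : Fin (m + 1)) :
      Function.support (ContinuousMap.realToNNReal.comp (g a)) = U a := by
    rw [← compl_compl (U a), hg a]
    ext z
    exact (Real.toNNReal_eq_zero.trans (hgI a z).1.ge_iff_eq').not
  refine ⟨fun a => ContinuousMap.realToNNReal.comp (g a), fun z => ?_, fun a => hsupp a ▸ hs a⟩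
  obtain ⟨a, ha⟩ := Set.mem_iUnion.1 (hcov.symm ▸ Set.mem_univ z : z ∈ ⋃ a, U a)
  exact ⟨a, Function.mem_support.1 (hsupp a ▸ ha)⟩

theorem HasMotionPlanner.pi {ι : Type*} {X : ι → Type*} [∀ i, TopologicalSpace (X i)]
    {U : ∀ i, Set (X i × X i)} (hU : ∀ i, HasMotionPlanner (U i)) :
    HasMotionPlanner {z : (∀ i, X i) × (∀ i, X i) | ∀ i, (z.1 i, z.2 i) ∈ U i} := by
  let f (i : ι) : C((∀ i, X i) × (∀ i, X i), X i × X i) := ⟨fun z => (z.1 i, z.2 i), by fun_prop⟩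
  exact hasMotionPlanner_iff_homotopic.2 <| .pi fun i =>
    ((hU i).homotopic_restrict_preimage (f i)).comp
      (.refl (.inclusion fun z (hz : ∀ i, f i z ∈ U i) => hz i))

theorem HasMotionPlanner.iUnion {X κ : Type*} [TopologicalSpace X] {W : κ → Set (X × X)}
    (hW : ∀ a, IsOpen (W a)) (hdisj : Pairwise (Function.onFun Disjoint W))
    (h : ∀ a, HasMotionPlanner (W a)) : HasMotionPlanner (⋃ a, W a) := by
  choose s hs using h
  let V (a : κ) : Set (⋃ a, W a) := Subtype.val ⁻¹' W a
  let t (a : κ) : C(V a, C(I, X)) :=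
    (s a).comp (ContinuousMap.restrictPreimage ⟨_, continuous_subtype_val⟩ (W a))
  have ht (a b : κ) (z) (ha : z ∈ V a) (hb : z ∈ V b) : t a ⟨z, ha⟩ = t b ⟨z, hb⟩ := by
    obtain rfl := hdisj.eq (Set.not_disjoint_iff.2 ⟨_, ha, hb⟩)
    rfl
  have hV (z : ⋃ a, W a) : ∃ a, V a ∈ nhds z := by
    obtain ⟨a, ha⟩ := Set.mem_iUnion.1 z.2
    exact ⟨a, ((hW a).preimage continuous_subtype_val).mem_nhds ha⟩
  refine ⟨ContinuousMap.liftCover V t ht hV, fun z => ?_⟩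
  obtain ⟨a, ha⟩ := Set.mem_iUnion.1 z.2
  rw [ContinuousMap.liftCover_coe (hS := hV) (⟨z, ha⟩ : V a)]
  exact hs a _

/-- The set where, among the functions `f β` with `deg β = deg α`, the function `f α` is the unique
largest one. -/
def strictMaxSet {Z A : Type*} (f : A → Z → ℝ≥0) (deg : A → ℕ) (α : A) : Set Z :=
  {z | f α z ≠ 0 ∧ ∀ β, β ≠ α → deg β = deg α → f β z < f α z}

theorem isOpen_strictMaxSet {Z A : Type*} [TopologicalSpace Z] [Finite A] {f : A → Z → ℝ≥0}
    (hf : ∀ α, Continuous (f α)) (deg : A → ℕ) (α : A) : IsOpen (strictMaxSet f deg α) := by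
  simp only [strictMaxSet, Set.ofPred_and, Set.ofPred_forall]
  refine (isOpen_ne_fun (hf α) continuous_const).inter ?_
  exact isOpen_iInter_of_finite fun β => isOpen_iInter_of_finite fun _ =>
    isOpen_iInter_of_finite fun _ => isOpen_lt (hf β) (hf α)

theorem disjoint_strictMaxSet {Z A : Type*} (f : A → Z → ℝ≥0) {deg : A → ℕ} {α β : A}
    (hαβ : α ≠ β) (hdeg : deg α = deg β) :
    Disjoint (strictMaxSet f deg α) (strictMaxSet f deg β) :=
  Set.disjoint_left.2 fun _ hα hβ => lt_asymm (hα.2 β hαβ.symm hdeg.symm) (hβ.2 α hαβ hdeg)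

-- At `z` the product attached to the pointwise least `α` with nonzero factors is the only nonzero
-- one of its degree.
theorem exists_mem_strictMaxSet_sum {ι : Type*} [Fintype ι] {k : ι → ℕ} {Z : ι → Type*}
    {l : ∀ i, Fin (k i + 1) → Z i → ℝ≥0} (hl : ∀ i z, ∃ a, l i a z ≠ 0) (z : ∀ i, Z i) :
    ∃ α, z ∈ strictMaxSet (fun (α : ∀ i, Fin (k i + 1)) (z : ∀ i, Z i) => ∏ i, l i (α i) (z i))
      (fun α => ∑ i, (α i : ℕ)) α := by
  choose α hα using fun i => exists_minimal_of_wellFoundedLT _ (hl i (z i))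
  have hpos : ∏ i, l i (α i) (z i) ≠ 0 := Finset.prod_ne_zero_iff.2 fun i _ => (hα i).prop
  refine ⟨α, hpos, fun β hβ hdeg => ?_⟩
  obtain ⟨i, hi⟩ : ∃ i, β i < α i := by
    by_contra! hle
    refine hβ (funext fun i => Fin.ext ?_)
    exact ((Finset.sum_eq_sum_iff_of_le fun i _ => Fin.le_def.1 (hle i)).1 hdeg.symm i
      (Finset.mem_univ i)).symm
  have h0 : l i (β i) (z i) = 0 := not_not.1 ((hα i).not_prop_of_lt hi)
  exact (Finset.prod_eq_zero (Finset.mem_univ i) h0).trans_lt hpos.bot_lt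

theorem topComplexity_pi_le {ι : Type*} [Fintype ι] (X : ι → Type*) [∀ i, TopologicalSpace (X i)]
    [∀ i, PerfectlyNormalSpace (X i × X i)] :
    topComplexity (∀ i, X i) ≤ ∑ i, topComplexity (X i) := by
  by_cases htop : ∑ i, topComplexity (X i) = ⊤
  · exact htop ▸ le_top
  choose k hk using fun i =>
    ENat.ne_top_iff_exists.1 (WithTop.sum_ne_top.1 htop i (Finset.mem_univ i))
  choose l hl hs using fun i => exists_support_cover_of_topComplexity_eq (hk i).symm
  let deg (α : ∀ i, Fin (k i + 1)) : ℕ := ∑ i, (α i : ℕ)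
  let f (α : ∀ i, Fin (k i + 1)) (z : (∀ i, X i) × (∀ i, X i)) : ℝ≥0 :=
    ∏ i, l i (α i) (z.1 i, z.2 i)
  let U (m : ℕ) := ⋃ α : {α // deg α = m}, strictMaxSet f deg α
  have hopen (α) : IsOpen (strictMaxSet f deg α) := isOpen_strictMaxSet (fun α => by fun_prop) deg α
  have hU (m : ℕ) : HasMotionPlanner (U m) := by
    refine .iUnion (fun α => hopen α) (fun α β hαβ => ?_) fun α => ?_
    · exact disjoint_strictMaxSet f (Subtype.coe_injective.ne hαβ) (α.2.trans β.2.symm)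
    · exact (HasMotionPlanner.pi fun i => hs i (α.1 i)).mono fun z hz i =>
        Finset.prod_ne_zero_iff.1 hz.1 i (Finset.mem_univ i)
  have hcov (z) : ∃ m : Fin (∑ i, k i + 1), z ∈ U m := by
    obtain ⟨α, hα⟩ := exists_mem_strictMaxSet_sum hl fun i => (z.1 i, z.2 i)
    have hdeg : deg α ≤ ∑ i, k i := Finset.sum_le_sum fun i _ => Fin.is_le (α i)
    exact ⟨⟨deg α, Nat.lt_succ_of_le hdeg⟩, Set.mem_iUnion.2 ⟨⟨α, rfl⟩, hα⟩⟩
  simp only [← hk, ← Nat.cast_sum]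
  exact topComplexity_le (U := fun m => U m) (fun m => isOpen_iUnion fun α => hopen α)
    (Set.iUnion_eq_univ_iff.2 hcov) fun m => hU m

end ProductInequality

section SphereHomotopy

open Metric

variable {E Y : Type*} [NormedAddCommGroup E] [TopologicalSpace Y]

theorem zero_notMem_segment_sphere [NormedSpace ℝ E] {x y : sphere (0 : E) 1} (h : x ≠ -y) :
    (0 : E) ∉ segment ℝ (x : E) y := fun h0 => by
  have hray : SameRay ℝ (-(x : E)) y := by simpa using sameRay_of_mem_segment h0
  have hnorm : ‖-(x : E)‖ = ‖(y : E)‖ := by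
    rw [norm_neg, norm_eq_of_mem_sphere, norm_eq_of_mem_sphere]
  exact h (Subtype.ext (neg_eq_iff_eq_neg.1 ((sameRay_iff_of_norm_eq hnorm).1 hray)))

theorem homotopic_of_forall_ne_neg [NormedSpace ℝ E] {u v : C(Y, sphere (0 : E) 1)}
    (h : ∀ y, u y ≠ -v y) : u.Homotopic v := by
  have hne (q : unitInterval × Y) :
      AffineMap.lineMap (u q.2 : E) (v q.2 : E) (q.1 : ℝ) ∈ ({0}ᶜ : Set E) := fun h0 =>
    zero_notMem_segment_sphere (h q.2) (segment_eq_image_lineMap ℝ (u q.2 : E) (v q.2) ▸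
      ⟨q.1, q.1.2, h0⟩)
  have hcont : Continuous fun q : unitInterval × Y =>
      AffineMap.lineMap (u q.2 : E) (v q.2 : E) (q.1 : ℝ) := by
    simp only [AffineMap.lineMap_apply_module]
    fun_prop
  refine ⟨{
    toFun := fun q => radialProjection ⟨_, hne q⟩
    continuous_toFun := radialProjection.continuous.comp (hcont.subtype_mk hne)
    map_zero_left := fun y => ?_
    map_one_left := fun y => ?_ }⟩
  · exact (congrArg radialProjection (Subtype.ext (AffineMap.lineMap_apply_zero _ _))).trans
      (radialProjection_coe (u y))
  · exact (congrArg radialProjection (Subtype.ext (AffineMap.lineMap_apply_one _ _))).trans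
      (radialProjection_coe (v y))

variable [InnerProductSpace ℝ E]

theorem homotopic_of_forall_inner_nonneg {u v : C(Y, sphere (0 : E) 1)}
    (h : ∀ y, 0 ≤ ⟪(u y : E), (v y : E)⟫_ℝ) : u.Homotopic v := by
  refine homotopic_of_forall_ne_neg fun y huv => (h y).not_gt ?_
  rw [huv, coe_neg_sphere, inner_neg_left, real_inner_self_eq_norm_sq, norm_eq_of_mem_sphere]
  norm_num

theorem homotopic_neg_of_forall_inner_eq_zero {u w : C(Y, sphere (0 : E) 1)}
    (h : ∀ y, ⟪(u y : E), (w y : E)⟫_ℝ = 0) : u.Homotopic (-u) := by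
  refine (homotopic_of_forall_inner_nonneg (v := w) fun y => (h y).ge).trans
    (homotopic_of_forall_inner_nonneg fun y => ?_)
  rw [ContinuousMap.neg_apply, coe_neg_sphere, inner_neg_right, real_inner_comm, h, neg_zero]

end SphereHomotopy

section SphereUpperBound

open Metric

variable {E : Type*} [NormedAddCommGroup E]

theorem hasMotionPlanner_sphere_ne_neg [NormedSpace ℝ E] :
    HasMotionPlanner {z : sphere (0 : E) 1 × sphere (0 : E) 1 | z.1 ≠ -z.2} :=
  hasMotionPlanner_iff_homotopic.2 (homotopic_of_forall_ne_neg fun z => z.2)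

variable [InnerProductSpace ℝ E]

-- A point is first moved to its antipode along the great circle in the direction of the tangent
-- vector `J x`, and then to `y ≠ x` along the shortest arc.
theorem hasMotionPlanner_sphere_of_skew {J : E →L[ℝ] E} (hJ : ∀ x, ⟪x, J x⟫_ℝ = 0) :
    HasMotionPlanner {z : sphere (0 : E) 1 × sphere (0 : E) 1 | z.1 ≠ z.2 ∧ J z.1 ≠ 0} := by
  let U : Set (sphere (0 : E) 1 × sphere (0 : E) 1) := {z | z.1 ≠ z.2 ∧ J z.1 ≠ 0}
  let w : C(U, sphere (0 : E) 1) :=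
    radialProjection.comp ⟨fun z => ⟨J z.1.1, z.2.2⟩, Continuous.subtype_mk (by fun_prop) _⟩
  refine hasMotionPlanner_iff_homotopic.2 <|
    (homotopic_neg_of_forall_inner_eq_zero (w := w) fun z => ?_).trans
      (homotopic_of_forall_ne_neg fun z hz => z.2.1 (neg_injective hz))
  exact (inner_smul_right _ _ _).trans (mul_eq_zero_of_right _ (hJ _))

theorem topComplexity_sphere_le_of_skew {k : ℕ} {J : Fin k → E →L[ℝ] E}
    (hJ : ∀ a x, ⟪x, J a x⟫_ℝ = 0) (hker : ∀ x, (∀ a, J a x = 0) → x = 0) :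
    topComplexity (sphere (0 : E) 1) ≤ k := by
  let U : Fin (k + 1) → Set (sphere (0 : E) 1 × sphere (0 : E) 1) :=
    Fin.cons {z | z.1 ≠ -z.2} fun a => {z | z.1 ≠ z.2 ∧ J a z.1 ≠ 0}
  have hopen : ∀ a, IsOpen (U a) := by
    refine Fin.cases (isOpen_ne_fun continuous_fst continuous_snd.neg) fun a => ?_
    have hJa : Continuous fun z : sphere (0 : E) 1 × sphere (0 : E) 1 => J a z.1 := by fun_prop
    exact (isOpen_ne_fun continuous_fst continuous_snd).inter (isOpen_ne_fun hJa continuous_const)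
  have hplan : ∀ a, HasMotionPlanner (U a) :=
    Fin.cases hasMotionPlanner_sphere_ne_neg fun a => hasMotionPlanner_sphere_of_skew (hJ a)
  refine topComplexity_le hopen (Set.iUnion_eq_univ_iff.2 fun z => ?_) hplan
  by_cases hz : z.1 = -z.2
  · obtain ⟨a, ha⟩ := not_forall.1 (mt (hker z.1) (ne_zero_of_mem_unit_sphere z.1))
    exact ⟨a.succ, fun h => ne_neg_of_mem_unit_sphere ℝ z.2 (h.symm.trans hz), ha⟩
  · exact ⟨0, hz⟩

theorem topComplexity_pi_sphere_le_of_skew {k : ℕ} {J : Fin k → E →L[ℝ] E}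
    (hJ : ∀ a x, ⟪x, J a x⟫_ℝ = 0) (hker : ∀ x, (∀ a, J a x = 0) → x = 0)
    (ι : Type*) [Fintype ι] :
    topComplexity (ι → sphere (0 : E) 1) ≤ ((k * Fintype.card ι : ℕ) : ℕ∞) := by
  calc topComplexity (ι → sphere (0 : E) 1)
      ≤ ∑ _ : ι, topComplexity (sphere (0 : E) 1) := topComplexity_pi_le _
    _ ≤ ∑ _ : ι, (k : ℕ∞) := Finset.sum_le_sum fun _ _ => topComplexity_sphere_le_of_skew hJ hker
    _ = ((k * Fintype.card ι : ℕ) : ℕ∞) := by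
      rw [Finset.sum_const, Finset.card_univ, nsmul_eq_mul, mul_comm, Nat.cast_mul]

end SphereUpperBound

section SkewMaps

open Module Metric

variable {E : Type*} [NormedAddCommGroup E] [InnerProductSpace ℝ E] [FiniteDimensional ℝ E]

-- `E` is isometric to `ℂᵏ`, on which multiplication by `i` is skew.
theorem exists_linearIsometry_inner_eq_zero (h : Even (finrank ℝ E)) :
    ∃ J : E →ₗᵢ[ℝ] E, ∀ x, ⟪x, J x⟫_ℝ = 0 := by
  obtain ⟨k, hk⟩ := h
  have hfinrank : finrank ℝ E = finrank ℝ (PiLp 2 fun _ : Fin k => ℂ) := by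
    rw [(WithLp.linearEquiv 2 ℝ (Fin k → ℂ)).finrank_eq, finrank_pi_fintype,
      Complex.finrank_real_complex, Finset.sum_const, Finset.card_fin, smul_eq_mul, mul_two, hk]
  let e : E ≃ₗᵢ[ℝ] PiLp 2 fun _ : Fin k => ℂ :=
    (stdOrthonormalBasis ℝ E).equiv (stdOrthonormalBasis ℝ _) (finCongr hfinrank)
  let c : Circle := ⟨Complex.I, mem_sphere_zero_iff_norm.2 Complex.norm_I⟩
  let i : (PiLp 2 fun _ : Fin k => ℂ) ≃ₗᵢ[ℝ] PiLp 2 fun _ : Fin k => ℂ :=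
    .piLpCongrRight 2 fun _ => rotation c
  refine ⟨(e.trans (i.trans e.symm)).toLinearIsometry, fun x => ?_⟩
  have hi (z : PiLp 2 fun _ : Fin k => ℂ) : ⟪z, i z⟫_ℝ = 0 := by
    rw [PiLp.inner_apply]
    exact Finset.sum_eq_zero fun j _ => real_inner_I_smul_self ℂ (z j)
  calc ⟪x, e.symm (i (e x))⟫_ℝ = ⟪e x, i (e x)⟫_ℝ := by
        rw [← e.inner_map_map, e.apply_symm_apply]
    _ = 0 := hi _

theorem exists_skew_of_even_finrank {L : Submodule ℝ E} (hL : Even (finrank ℝ L)) :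
    ∃ J : E →L[ℝ] E, ∀ x, ⟪x, J x⟫_ℝ = 0 ∧ J x ∈ L ∧ ‖J x‖ = ‖L.starProjection x‖ := by
  obtain ⟨J, hJ⟩ := exists_linearIsometry_inner_eq_zero hL
  refine ⟨L.subtypeL ∘L J.toContinuousLinearMap ∘L L.orthogonalProjectionOnto, fun x =>
    ⟨?_, Subtype.prop _, J.norm_map _⟩⟩
  exact (Submodule.inner_orthogonalProjectionOnto_eq_of_mem_right _ x).symm.trans (hJ _)

theorem exists_skew_ker_le_orthogonal {L : Submodule ℝ E} (hL : Even (finrank ℝ L)) :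
    ∃ J : E →L[ℝ] E, (∀ x, ⟪x, J x⟫_ℝ = 0) ∧ ∀ x, J x = 0 → x ∈ Lᗮ := by
  obtain ⟨J, hJ⟩ := exists_skew_of_even_finrank hL
  refine ⟨J, fun x => (hJ x).1, fun x hx => L.starProjection_apply_eq_zero_iff.1 ?_⟩
  rw [← norm_eq_zero, ← (hJ x).2.2, hx, norm_zero]

-- If `J` is a complex structure on `Kᗮ`, then `id ⊕ J` on `K ⊕ Kᗮ` is halfway between the identity
-- and the reflection.
theorem unitSphereMap_reflection_homotopic_id {K : Submodule ℝ E} (hK : Even (finrank ℝ Kᗮ)) :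
    (unitSphereMap K.reflection.toLinearIsometry).Homotopic (.id _) := by
  obtain ⟨J, hJ⟩ := exists_skew_of_even_finrank hK
  have hKJ (x : E) : ⟪K.starProjection x, J x⟫_ℝ = 0 :=
    (hJ x).2.1 _ (K.starProjection_apply_mem x)
  have hKK (x : E) : ⟪x, K.starProjection x⟫_ℝ = ‖K.starProjection x‖ ^ 2 := by
    rw [← real_inner_self_eq_norm_sq, K.inner_starProjection_left_eq_right,
      K.starProjection_eq_self_iff.2 (K.starProjection_apply_mem x)]
  let A : E →ₗᵢ[ℝ] E :=
    { toLinearMap := (K.starProjection + J : E →L[ℝ] E)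
      norm_map' := fun x => by
        rw [← sq_eq_sq₀ (norm_nonneg _) (norm_nonneg _),
          K.norm_sq_eq_add_norm_sq_starProjection x, ← (hJ x).2.2]
        simp only [sq]
        exact norm_add_sq_eq_norm_sq_add_norm_sq_real (hKJ x) }
  refine .trans (g := unitSphereMap A)
    (homotopic_of_forall_inner_nonneg fun x => ?_) (homotopic_of_forall_inner_nonneg fun x => ?_)
  · calc 0 ≤ ‖K.starProjection x‖ ^ 2 := sq_nonneg _
      _ = ⟪K.reflection x, K.starProjection x + J x⟫_ℝ := by
        rw [K.reflection_apply, two_nsmul, inner_sub_left, inner_add_left, inner_add_right,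
          inner_add_right, hKJ, hKK, (hJ x).1, real_inner_self_eq_norm_sq]
        ring
  · calc 0 ≤ ‖K.starProjection x‖ ^ 2 := sq_nonneg _
      _ = ⟪K.starProjection x + J x, (x : E)⟫_ℝ := by
        rw [real_inner_comm, inner_add_right, hKK, (hJ x).1, add_zero]

end SkewMaps

section Spheres

open Module Metric

variable {E : Type*} [NormedAddCommGroup E] [InnerProductSpace ℝ E] [FiniteDimensional ℝ E]
  (ι : Type*) [Fintype ι]

theorem even_finrank_orthogonal_span_singleton (h : Odd (finrank ℝ E)) {p : E} (hp : p ≠ 0) :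
    Even (finrank ℝ (ℝ ∙ p)ᗮ) := by
  have hsum := (ℝ ∙ p).finrank_add_finrank_orthogonal
  rw [finrank_span_singleton hp] at hsum
  rw [← hsum, add_comm] at h
  exact Nat.not_odd_iff_even.1 fun h' => Nat.not_even_iff_odd.2 h h'.add_one

theorem exists_norm_eq_one_inner_eq_zero (h : 1 < finrank ℝ E) :
    ∃ p q : E, ‖p‖ = 1 ∧ ‖q‖ = 1 ∧ ⟪p, q⟫_ℝ = 0 := by
  let b := stdOrthonormalBasis ℝ E
  exact ⟨b ⟨0, by lia⟩, b ⟨1, h⟩, b.norm_eq_one _, b.norm_eq_one _, b.inner_eq_zero (by simp)⟩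

theorem topComplexity_pi_sphere_of_even_finrank [Nontrivial E] (h : Even (finrank ℝ E)) :
    topComplexity (ι → sphere (0 : E) 1) = Fintype.card ι := by
  obtain ⟨J, hJ⟩ := exists_linearIsometry_inner_eq_zero h
  refine le_antisymm ?_ (card_le_topComplexity_pi_sphere ι)
  simpa only [one_mul] using topComplexity_pi_sphere_le_of_skew
    (J := fun _ : Fin 1 => J.toContinuousLinearMap) (fun _ => hJ)
    (fun _ hx => (map_eq_zero_iff J J.injective).1 (hx 0)) ι

theorem topComplexity_pi_sphere_of_odd_finrank (hodd : Odd (finrank ℝ E))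
    (hE : 1 < finrank ℝ E) :
    topComplexity (ι → sphere (0 : E) 1) = ((2 * Fintype.card ι : ℕ) : ℕ∞) := by
  obtain ⟨p, q, hp, hq, hpq⟩ := exists_norm_eq_one_inner_eq_zero hE
  have heven {v : E} (hv : ‖v‖ = 1) : Even (finrank ℝ (ℝ ∙ v)ᗮ) :=
    even_finrank_orthogonal_span_singleton hodd (norm_ne_zero_iff.1 (hv ▸ one_ne_zero))
  refine le_antisymm ?_ (two_mul_card_le_topComplexity_pi_sphere hp
    (unitSphereMap_reflection_homotopic_id (heven hp)) ι)
  obtain ⟨J, hJ, hJker⟩ := exists_skew_ker_le_orthogonal (heven hp)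
  obtain ⟨K, hK, hKker⟩ := exists_skew_ker_le_orthogonal (heven hq)
  simp only [Submodule.orthogonal_orthogonal] at hJker hKker
  refine topComplexity_pi_sphere_le_of_skew (J := ![J, K])
    (Fin.forall_fin_two.2 ⟨hJ, hK⟩) (fun x hx => ?_) ι
  obtain ⟨a, rfl⟩ := Submodule.mem_span_singleton.1 (hJker x (hx 0))
  obtain ⟨b, hb⟩ := Submodule.mem_span_singleton.1 (hKker _ (hx 1))
  rw [← inner_self_eq_zero (𝕜 := ℝ)]
  nth_rw 2 [← hb]
  rw [inner_smul_left, inner_smul_right, hpq, mul_zero, mul_zero]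

theorem topComplexity_pi_sphere_general {d : ℕ} (hE : finrank ℝ E = d + 1) (hd : 1 ≤ d) :
    (Odd d → topComplexity (ι → sphere (0 : E) 1) = Fintype.card ι) ∧
      (Even d → topComplexity (ι → sphere (0 : E) 1) = ((2 * Fintype.card ι : ℕ) : ℕ∞)) := by
  have : Nontrivial E := nontrivial_of_finrank_eq_succ hE
  exact ⟨fun h => topComplexity_pi_sphere_of_even_finrank ι (hE ▸ h.add_one),
    fun h => topComplexity_pi_sphere_of_odd_finrank ι (hE ▸ h.add_one) (by lia)⟩

end Spheres

/-- The topological complexity of a product of `n` copies of the sphere `S^d` is `n` when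
`d` is odd and `2n` when `d` is even. -/
theorem topComplexity_pi_sphere (n d : ℕ) (hn : 1 ≤ n) (hd : 1 ≤ d) :
    (Odd d → topComplexity (Fin n → unitSphere d) = (n : ℕ∞)) ∧
    (Even d → topComplexity (Fin n → unitSphere d) = ((2 * n : ℕ) : ℕ∞)) := by
  have h := topComplexity_pi_sphere_general (Fin n) (finrank_euclideanSpace_fin (𝕜 := ℝ)) hd
  rwa [Fintype.card_fin] at h
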